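/- In the tower construction, for every n ≥ 2: Bₙ ∩ K_{n−1} = D_{n−1} ⊆ A_{n−1} = Aₙ ∩ K_{n−1}, and Dₙ ∩ K_{n−1} = D_{n−1}. -/

import Mathlib

/- Preamble: the tower construction of Fontana–Kabbaj (Example 3.1).
All rings are realized as subsets/subrings of one ambient field `Amb k0 r`:
the rational function field over `k0` in the indeterminates
`X₁, X₂, …` (indexed by `ℕ`), `Y`, and `Z₁, …, Z_{r-1}`. -/

noncomputable section

open Polynomial

/-- Index type for the indeterminates: `Sum.inl n` is `Xₙ`, `Sum.inr (Sum.inl ())` is `Y`,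
and `Sum.inr (Sum.inr i)` is `Z_{i+1}`. -/
abbrev TowerVars (r : ℕ) : Type := ℕ ⊕ (Unit ⊕ Fin (r - 1))

/-- The ambient field: the fraction field of the polynomial ring over `k0` in all the
indeterminates. -/
abbrev Amb (k0 : Type) [Field k0] (r : ℕ) : Type :=
  FractionRing (MvPolynomial (TowerVars r) k0)

variable (k0 : Type) [Field k0] (r : ℕ)

/-- The indeterminate `Xₙ` as an element of the ambient field. -/
def ambX (n : ℕ) : Amb k0 r :=
  algebraMap (MvPolynomial (TowerVars r) k0) (Amb k0 r) (MvPolynomial.X (Sum.inl n))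

/-- The indeterminate `Y` as an element of the ambient field. -/
def ambY : Amb k0 r :=
  algebraMap (MvPolynomial (TowerVars r) k0) (Amb k0 r) (MvPolynomial.X (Sum.inr (Sum.inl ())))

/-- The indeterminates `Z₁, …, Z_{r-1}` as elements of the ambient field. -/
def ambZ (i : Fin (r - 1)) : Amb k0 r :=
  algebraMap (MvPolynomial (TowerVars r) k0) (Amb k0 r) (MvPolynomial.X (Sum.inr (Sum.inr i)))

/-- The image of the base field `k0` in the ambient field. -/
def baseSet : Set (Amb k0 r) :=
  Set.range fun c : k0 => algebraMap (MvPolynomial (TowerVars r) k0) (Amb k0 r) (MvPolynomial.C c)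

/-- `kₙ := k0(X₁, …, Xₙ)` as a subfield of the ambient field. -/
def kfld (n : ℕ) : Subfield (Amb k0 r) :=
  Subfield.closure (baseSet k0 r ∪ {x | ∃ i, 1 ≤ i ∧ i ≤ n ∧ x = ambX k0 r i})

/-- `Fₙ := kₙ(Z₁, …, Z_{r-1})`. -/
def Ffld (n : ℕ) : Subfield (Amb k0 r) :=
  Subfield.closure (↑(kfld k0 r n) ∪ Set.range (ambZ k0 r))

/-- `Kₙ := Fₙ(Y)`. -/
def Kfld (n : ℕ) : Subfield (Amb k0 r) :=
  Subfield.closure (↑(Ffld k0 r n) ∪ {ambY k0 r})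

/-- The polynomial ring `Fₙ[Y]` as a subring of the ambient field. -/
def polyRing (n : ℕ) : Subring (Amb k0 r) :=
  Subring.closure (↑(Ffld k0 r n) ∪ {ambY k0 r})

/-- `Vₙ := Fₙ[Y]_{(Y)}`, the localization of `Fₙ[Y]` at the prime `(Y)`, as a subset of
the ambient field. -/
def Vset (n : ℕ) : Set (Amb k0 r) :=
  {x | ∃ f ∈ polyRing k0 r n, ∃ g ∈ polyRing k0 r n,
    (¬ ∃ h ∈ polyRing k0 r n, g = ambY k0 r * h) ∧ x = f / g}

/-- `Mₙ := Y·Fₙ[Y]_{(Y)}`, the maximal ideal of `Vₙ`. -/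
def Mset (n : ℕ) : Set (Amb k0 r) :=
  {x | ∃ v ∈ Vset k0 r n, x = ambY k0 r * v}

/-- `Aₙ := kₙ + Mₙ`. -/
def Aset (n : ℕ) : Set (Amb k0 r) :=
  {x | ∃ c ∈ kfld k0 r n, ∃ m ∈ Mset k0 r n, x = c + m}

/-- `k := ⋃ₙ kₙ` as a subset of the ambient field. -/
def kfldU : Set (Amb k0 r) := ⋃ n, (kfld k0 r n : Set (Amb k0 r))

/-- `F := k(Z₁, …, Z_{r-1}) = ⋃ₙ Fₙ`. -/
def FfldU : Subfield (Amb k0 r) :=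
  Subfield.closure (kfldU k0 r ∪ Set.range (ambZ k0 r))

/-- `K := F(Y) = ⋃ₙ Kₙ`. -/
def KfldU : Subfield (Amb k0 r) :=
  Subfield.closure (↑(FfldU k0 r) ∪ {ambY k0 r})

/-- The polynomial ring `F[Y]`. -/
def polyRingU : Subring (Amb k0 r) :=
  Subring.closure (↑(FfldU k0 r) ∪ {ambY k0 r})

/-- `V := F[Y]_{(Y)}`. -/
def VsetU : Set (Amb k0 r) :=
  {x | ∃ f ∈ polyRingU k0 r, ∃ g ∈ polyRingU k0 r,
    (¬ ∃ h ∈ polyRingU k0 r, g = ambY k0 r * h) ∧ x = f / g}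

/-- `M := Y·F[Y]_{(Y)} = ⋃ₙ Mₙ`. -/
def MsetU : Set (Amb k0 r) :=
  {x | ∃ v ∈ VsetU k0 r, x = ambY k0 r * v}

/-- `A := k + M = ⋃ₙ Aₙ`. -/
def AsetU : Set (Amb k0 r) :=
  {x | ∃ c ∈ kfldU k0 r, ∃ m ∈ MsetU k0 r, x = c + m}

/-- `X′ₙ := (1 + Y·Xₙ)/Y`. -/
def ambX' (n : ℕ) : Amb k0 r :=
  (1 + ambY k0 r * ambX k0 r n) / ambY k0 r

/-- `1` belongs to the ideal of `W` generated by the coefficients of `g`, where `W` is a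
subring (given as a subset `S`) of the ambient field. -/
def unitContent (S : Set (Amb k0 r)) (g : Polynomial (Amb k0 r)) : Prop :=
  ∃ (t : Finset ℕ) (u : ℕ → Amb k0 r), (∀ i ∈ t, u i ∈ S) ∧ ∑ i ∈ t, u i * g.coeff i = 1

/-- The Nagata ring `W(T)` of a subring `W ⊆ Amb k0 r` (given as a subset `S`) in the
"variable" `T`: all fractions `f(T)/g(T)` with `f, g ∈ W[T]` and the coefficients of `g`
generating the unit ideal of `W`.  (When `T` is transcendental over `W` this is the usual
Nagata ring.) -/
def nagataSet (S : Set (Amb k0 r)) (T : Amb k0 r) : Set (Amb k0 r) :=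
  {x | ∃ f g : Polynomial (Amb k0 r), (∀ i, f.coeff i ∈ S) ∧ (∀ i, g.coeff i ∈ S) ∧
    unitContent k0 r S g ∧ x = f.eval T / g.eval T}

/-- The valuation overrings of a ring `D` (given as a subset) inside a subfield `L` of the
ambient field: subrings `W` with `D ⊆ W ⊆ L` such that for every `x ∈ L`, `x ∈ W` or
`x⁻¹ ∈ W`. -/
def valOverringsIn (D : Set (Amb k0 r)) (L : Subfield (Amb k0 r)) : Set (Subring (Amb k0 r)) :=
  {W | D ⊆ ↑W ∧ (W : Set (Amb k0 r)) ⊆ (L : Set (Amb k0 r)) ∧ ∀ x ∈ L, x ∈ W ∨ x⁻¹ ∈ W}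

/-- The Kronecker function ring `Kr_{L(T)}(D, b) = ⋂ {W(T) : W a valuation overring of `D`
in `L`}`, realized as a subset of the ambient field. -/
def krSet (D : Set (Amb k0 r)) (L : Subfield (Amb k0 r)) (T : Amb k0 r) : Set (Amb k0 r) :=
  ⋂ W ∈ valOverringsIn k0 r D L, nagataSet k0 r (↑W) T

/-- The tower `Dₙ`: `D₁ := A₁` and `Dₙ := Bₙ ∩ Aₙ` for `n ≥ 2`, where
`Bₙ := Kr_{K_{n-1}(X′ₙ)}(D_{n-1}, b)`.  (The value at `0` is junk, set to `D₁`.) -/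
def Dset : ℕ → Set (Amb k0 r)
  | 0 => Aset k0 r 1
  | 1 => Aset k0 r 1
  | n + 2 => krSet k0 r (Dset (n + 1)) (Kfld k0 r (n + 1)) (ambX' k0 r (n + 2)) ∩ Aset k0 r (n + 2)

/-- `Bₙ := Kr_{K_{n-1}(X′ₙ)}(D_{n-1}, b)` (meaningful for `n ≥ 2`). -/
def Bset (n : ℕ) : Set (Amb k0 r) :=
  krSet k0 r (Dset k0 r (n - 1)) (Kfld k0 r (n - 1)) (ambX' k0 r n)

/-- `𝓜ₙ := Mₙ ∩ Dₙ`. -/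
def MMset (n : ℕ) : Set (Amb k0 r) := Mset k0 r n ∩ Dset k0 r n

/-- `D := ⋃__{n ≥ 1} Dₙ`. -/
def DsetU : Set (Amb k0 r) := ⋃ n, Dset k0 r n

/-- `𝓜 := ⋃_{n ≥ 2} 𝓜ₙ`. -/
def MMsetU : Set (Amb k0 r) := ⋃ n, MMset k0 r (n + 2)

/-- The localization `D_m = {a/b : a, b ∈ D, b ∉ m}` of a subring `D` of the ambient
field (given as a subset) at (the complement of) a subset `m`. -/
def locAt (D m : Set (Amb k0 r)) : Set (Amb k0 r) :=
  {x | ∃ a ∈ D, ∃ b ∈ D, b ∉ m ∧ x = a / b}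

/-- The quotient field, inside the ambient field, of a subring given as a subset. -/
def qfSet (D : Set (Amb k0 r)) : Set (Amb k0 r) :=
  {x | ∃ a ∈ D, ∃ b ∈ D, b ≠ 0 ∧ x = a / b}

/-- The nonunits of a subring of the ambient field, given as a subset: in a local
subring of a field these form the maximal ideal. -/
def nonunitsIn (S : Set (Amb k0 r)) : Set (Amb k0 r) :=
  {x | x ∈ S ∧ (x = 0 ∨ x⁻¹ ∉ S)}

/-- A subring `A` of the ambient field is a pseudo-valuation domain: it is local, and its
maximal ideal (= set of nonunits) is also the maximal ideal of some valuation overring of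
`A` in its quotient field. -/
def IsPVDSub (A : Subring (Amb k0 r)) : Prop :=
  IsLocalRing ↥A ∧
  ∃ W : Subring (Amb k0 r), (A : Set (Amb k0 r)) ⊆ ↑W ∧
    (W : Set (Amb k0 r)) ⊆ qfSet k0 r ↑A ∧
    (∀ x ∈ qfSet k0 r (A : Set (Amb k0 r)), x ∈ W ∨ x⁻¹ ∈ W) ∧
    nonunitsIn k0 r ↑A = nonunitsIn k0 r ↑W

/-- The valuative dimension of a subring of the ambient field: the supremum of the Krull
dimensions of its valuation overrings (in its quotient field). -/
def subValuativeDim (A : Subring (Amb k0 r)) : WithBot ℕ∞ :=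
  ⨆ W : {W : Subring (Amb k0 r) // (A : Set (Amb k0 r)) ⊆ ↑W ∧
      (W : Set (Amb k0 r)) ⊆ qfSet k0 r ↑A ∧
      ∀ x ∈ qfSet k0 r (A : Set (Amb k0 r)), x ∈ W ∨ x⁻¹ ∈ W},
    ringKrullDim ↥(W : Subring (Amb k0 r))


/-- `1` belongs to the ideal generated by the coefficients of a multivariable polynomial
`g` in the subring given by the subset `S`. -/
def mvUnitContent (S : Set (Amb k0 r)) (g : MvPolynomial ℕ (Amb k0 r)) : Prop :=
  ∃ (t : Finset (ℕ →₀ ℕ)) (u : (ℕ →₀ ℕ) → Amb k0 r),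
    (∀ m ∈ t, u m ∈ S) ∧ ∑ m ∈ t, u m * MvPolynomial.coeff m g = 1

/-- The Nagata ring `W(T₀, T₁, …)` of a subring `W` of the ambient field (given as a
subset `S`) in countably many "variables" `T j`: all fractions `f(T)/g(T)` with
`f, g ∈ W[T₀, T₁, …]` and the coefficients of `g` generating the unit ideal of `W`. -/
def nagataSetMv (S : Set (Amb k0 r)) (T : ℕ → Amb k0 r) : Set (Amb k0 r) :=
  {x | ∃ f g : MvPolynomial ℕ (Amb k0 r),
    (∀ m, MvPolynomial.coeff m f ∈ S) ∧ (∀ m, MvPolynomial.coeff m g ∈ S) ∧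
    mvUnitContent k0 r S g ∧ x = MvPolynomial.eval T f / MvPolynomial.eval T g}

/-- A subring `S` of the ambient field is an *essential* domain: `S` is the intersection
of a family of localizations `S_p` at primes `p ∈ Δ`, each of which is a valuation domain
(with quotient field the quotient field of `S`). -/
def IsEssentialSub (S : Subring (Amb k0 r)) : Prop :=
  ∃ Δ : Set (Ideal ↥S),
    (∀ p ∈ Δ, p.IsPrime) ∧
    (∀ p ∈ Δ, ∀ x ∈ qfSet k0 r (S : Set (Amb k0 r)),
      x ∈ locAt k0 r ↑S (Subtype.val '' (p : Set ↥S)) ∨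
      x⁻¹ ∈ locAt k0 r ↑S (Subtype.val '' (p : Set ↥S))) ∧
    (S : Set (Amb k0 r)) = ⋂ p ∈ Δ, locAt k0 r ↑S (Subtype.val '' (p : Set ↥S))

end

/-!
All contractions reduce to intersections of valuation rings. A Nagata ring `W(T)` with `T`
transcendental over `L ⊇ W` meets `L` in `W`, so `Kr_{L(T)}(D, b) ∩ L` is the intersection of the
valuation overrings of `D` in `L`; hence `Bₙ ∩ K_{n-1} = D_{n-1}` as soon as `D_{n-1}` is an
intersection of valuation rings of `K_{n-1}`. This property passes up the tower. For `Bₙ` it holds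
because the Nagata ring of a valuation ring is again a valuation ring (divide numerator and
denominator by coefficients of largest value) and `Kₙ = K_{n-1}(X′ₙ)`. For `Aₙ` it says that `Aₙ` is
integrally closed in `Kₙ`: `Aₙ` is the preimage of `kₙ` under the `Y`-adic place of `Kₙ`, and `kₙ`
is algebraically closed in its residue field `Fₙ`.

To relate the places for different `n`, they are all induced by valuation rings of the ambient
field that contain `Fₙ` and have `Y` in their maximal ideal. The equality `A_{n-1} = Aₙ ∩ K_{n-1}`
is then a comparison of constant terms, by `kₙ ∩ F_{n-1} = k_{n-1}`.
-/

open Polynomial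

theorem isIntegralElem_of_range_le {R R' S : Type*} [CommRing R] [CommRing R'] [CommRing S]
    {f : R →+* S} {g : R' →+* S} (hfg : f.range ≤ g.range) {x : S} (hx : f.IsIntegralElem x) :
    g.IsIntegralElem x := by
  obtain ⟨p, hp, hpx⟩ := hx
  have hlift : p.map f ∈ lifts g :=
    (lifts_iff_coeff_lifts _).2 fun i ↦ by simpa using hfg ⟨p.coeff i, rfl⟩
  cases subsingleton_or_nontrivial S
  · exact ⟨1, monic_one, Subsingleton.elim _ _⟩
  obtain ⟨q, hqp, -, hq⟩ := lifts_and_degree_eq_and_monic hlift (hp.map f)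
  exact ⟨q, hq, by rw [← eval_map, hqp, eval_map, hpx]⟩

section AddMaximalIdeal

variable {K : Type*} [Field K]

/-- The ring `k + 𝔪_V` of `D + M` constructions. It is encoded as the preimage, under the
residue map of `V`, of the image of `k ∩ V`, so that it is a subring of `V` without assuming
`k ⊆ V`. -/
def addMaximalIdeal (k : Subfield K) (V : ValuationSubring K) : Subring K :=
  (((k.toSubring.comap V.subtype).map (IsLocalRing.residue V)).comap
    (IsLocalRing.residue V)).map V.subtype

theorem residue_eq_residue_iff_sub_mem_nonunits {V : ValuationSubring K} {x y : V} :
    IsLocalRing.residue V x = IsLocalRing.residue V y ↔ (x - y : K) ∈ V.nonunits := by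
  rw [← sub_eq_zero, ← map_sub, IsLocalRing.residue_eq_zero_iff, ← V.coe_mem_nonunits_iff]
  rfl

variable {k F : Subfield K} {V : ValuationSubring K}

theorem mem_addMaximalIdeal_iff (hk : k.toSubring ≤ V.toSubring) {x : K} :
    x ∈ addMaximalIdeal k V ↔ ∃ c ∈ k, x - c ∈ V.nonunits := by
  constructor
  · rintro ⟨x, ⟨c, hc, hcx⟩, rfl⟩
    exact ⟨c, hc, residue_eq_residue_iff_sub_mem_nonunits.1 hcx.symm⟩
  · rintro ⟨c, hc, hxc⟩
    have hx : x ∈ V := by simpa using add_mem (V.nonunits_subset hxc) (hk hc)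
    exact ⟨⟨x, hx⟩, ⟨⟨c, hk hc⟩, hc, (residue_eq_residue_iff_sub_mem_nonunits.2 hxc).symm⟩, rfl⟩

theorem addMaximalIdeal_le : addMaximalIdeal k V ≤ V.toSubring := by
  rintro _ ⟨x, -, rfl⟩
  exact x.2

theorem eq_zero_of_mem_subfield_of_mem_nonunits (hF : F.toSubring ≤ V.toSubring) {x : K}
    (hx : x ∈ F) (hxV : x ∈ V.nonunits) : x = 0 :=
  (V.mem_nonunits_iff_or.1 hxV).resolve_right fun h ↦ h (hF (F.inv_mem hx))

theorem isIntegral_of_isIntegral_addMaximalIdeal (hkF : k ≤ F) (hF : F.toSubring ≤ V.toSubring)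
    {x e : K} (hx : IsIntegral (addMaximalIdeal k V) x) (he : e ∈ F) (hxe : x - e ∈ V.nonunits) :
    IsIntegral k e := by
  have hxV : x ∈ V := by simpa using add_mem (V.nonunits_subset hxe) (hF he)
  -- Reducing an equation of `x` modulo `𝔪_V` gives an equation of the residue of `e` over `k`.
  let φ : F →+* IsLocalRing.ResidueField V := (IsLocalRing.residue V).comp (Subring.inclusion hF)
  let ι : k →+* F := Subfield.inclusion hkF
  let j : addMaximalIdeal k V →+* V := Subring.inclusion addMaximalIdeal_le
  have hφe : IsLocalRing.residue V ⟨x, hxV⟩ = φ ⟨e, he⟩ :=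
    residue_eq_residue_iff_sub_mem_nonunits.2 hxe
  have hxj : j.IsIntegralElem ⟨x, hxV⟩ := .of_map (g := V.subtype) V.subtype_injective hx
  have hrange : ((IsLocalRing.residue V).comp j).range ≤ (φ.comp ι).range := by
    rintro _ ⟨⟨y, hy⟩, rfl⟩
    obtain ⟨c, hc, hyc⟩ := (mem_addMaximalIdeal_iff fun _ h ↦ hF (hkF h)).1 hy
    exact ⟨⟨c, hc⟩, (residue_eq_residue_iff_sub_mem_nonunits.2 hyc).symm⟩
  have heι : (φ.comp ι).IsIntegralElem (φ ⟨e, he⟩) :=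
    isIntegralElem_of_range_le hrange (hφe ▸ hxj.map _)
  exact (RingHom.IsIntegralElem.of_map φ.injective heι).map F.subtype

theorem mem_of_isIntegral_addMaximalIdeal {x : K} (hx : IsIntegral (addMaximalIdeal k V) x) :
    x ∈ V := by
  have hxV : IsIntegral V x :=
    hx.map_of_comp_eq (Subring.inclusion addMaximalIdeal_le) (.id K) rfl
  obtain ⟨y, rfl⟩ := IsIntegrallyClosed.isIntegral_iff.1 hxV
  exact y.2

end AddMaximalIdeal

section AdicPlace

variable {K : Type*} [Field K] {E : Subfield K} {T : K} {V : ValuationSubring K}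

theorem mem_closure_union_singleton_iff_exists_aeval {x : K} :
    x ∈ Subring.closure ((E : Set K) ∪ {T}) ↔ ∃ p : E[X], aeval T p = x := by
  have hrange : Set.range (algebraMap E K) = E := Subtype.range_val
  rw [← AlgHom.mem_range, ← Algebra.adjoin_singleton_eq_range_aeval, ← Subalgebra.mem_toSubring,
    Algebra.adjoin_eq_ring_closure, hrange]

theorem aeval_eq_aeval_divX_mul_add (p : E[X]) : aeval T p = T * aeval T p.divX + p.coeff 0 := by
  nth_rw 1 [← divX_mul_X_add p]
  simp only [map_add, map_mul, aeval_X, aeval_C, mul_comm T]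
  rfl

theorem exists_valuationSubring_of_transcendental (hT : Transcendental E T) :
    ∃ V : ValuationSubring K, E.toSubring ≤ V.toSubring ∧ T ∈ V.nonunits := by
  let R : Subring K := Subring.closure ((E : Set K) ∪ {T})
  let t : R := ⟨T, Subring.subset_closure (Or.inr rfl)⟩
  have ht : Ideal.span {t} ≠ ⊤ := by
    rw [Ne, Ideal.span_singleton_eq_top, isUnit_iff_exists_inv]
    rintro ⟨⟨h, hh⟩, hth⟩
    obtain ⟨p, rfl⟩ := mem_closure_union_singleton_iff_exists_aeval.1 hh
    have hp : aeval T (X * p) = aeval T (1 : E[X]) := by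
      simpa [t] using congrArg Subtype.val hth
    exact not_isUnit_X (IsUnit.of_mul_eq_one _ (transcendental_iff_injective.1 hT hp))
  obtain ⟨V, hRV, hV⟩ := Ideal.image_subset_nonunits_valuationSubring _ ht
  exact ⟨V, fun e he ↦ hRV (Subring.subset_closure (Or.inl he)),
    hV ⟨t, Ideal.mem_span_singleton_self t, rfl⟩⟩

theorem exists_eq_pow_mul_aeval {x : K} (hx : x ∈ Subring.closure ((E : Set K) ∪ {T}))
    (hx0 : x ≠ 0) : ∃ (m : ℕ) (p : E[X]), p.coeff 0 ≠ 0 ∧ x = T ^ m * aeval T p := by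
  obtain ⟨p, rfl⟩ := mem_closure_union_singleton_iff_exists_aeval.1 hx
  have hp : p ≠ 0 := by rintro rfl; simp at hx0
  obtain ⟨q, hpq, hq⟩ := p.exists_eq_pow_rootMultiplicity_mul_and_not_dvd hp 0
  rw [map_zero, sub_zero] at hpq hq
  exact ⟨p.rootMultiplicity 0, q, mt X_dvd_iff.2 hq, by nth_rw 1 [hpq]; simp⟩

theorem mul_mem_nonunits {x y : K} (hx : x ∈ V.nonunits) (hy : y ∈ V) : x * y ∈ V.nonunits := by
  rw [V.mem_nonunits_iff, map_mul]
  exact mul_lt_one_of_lt_of_le hx ((V.valuation_le_one_iff y).2 hy)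

variable (hE : E.toSubring ≤ V.toSubring) (hT : T ∈ V.nonunits)
include hE hT

theorem aeval_mem_valuationSubring (p : E[X]) : aeval T p ∈ V := by
  have hle : Subring.closure ((E : Set K) ∪ {T}) ≤ V.toSubring :=
    Subring.closure_le.2 (Set.union_subset hE (Set.singleton_subset_iff.2 (V.nonunits_subset hT)))
  exact hle (mem_closure_union_singleton_iff_exists_aeval.2 ⟨p, rfl⟩)

theorem aeval_sub_coeff_zero_mem_nonunits (p : E[X]) : aeval T p - p.coeff 0 ∈ V.nonunits := by
  rw [aeval_eq_aeval_divX_mul_add, add_sub_cancel_right]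
  exact mul_mem_nonunits hT (aeval_mem_valuationSubring hE hT _)

theorem aeval_mem_nonunits_iff {p : E[X]} : aeval T p ∈ V.nonunits ↔ p.coeff 0 = 0 := by
  have hp := aeval_sub_coeff_zero_mem_nonunits hE hT p
  refine ⟨fun h ↦ ?_, fun h ↦ by simpa [h] using hp⟩
  have hc : (p.coeff 0 : K) ∈ V.nonunits := by simpa using sub_mem h hp
  exact_mod_cast eq_zero_of_mem_subfield_of_mem_nonunits hE (p.coeff 0).2 hc

theorem aeval_inv_mem_valuationSubring {q : E[X]} (hq : q.coeff 0 ≠ 0) : (aeval T q)⁻¹ ∈ V := by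
  by_contra h
  exact hq ((aeval_mem_nonunits_iff hE hT).1 (V.mem_nonunits_iff_or.2 (Or.inr h)))

theorem aeval_ne_zero_of_coeff_zero_ne_zero {q : E[X]} (hq : q.coeff 0 ≠ 0) : aeval T q ≠ 0 :=
  fun h ↦ hq ((aeval_mem_nonunits_iff hE hT).1 (V.mem_nonunits_iff_or.2 (Or.inl h)))

theorem aeval_div_aeval_mem_valuationSubring (p : E[X]) {q : E[X]} (hq : q.coeff 0 ≠ 0) :
    aeval T p / aeval T q ∈ V := by
  rw [div_eq_mul_inv]
  exact mul_mem (aeval_mem_valuationSubring hE hT p) (aeval_inv_mem_valuationSubring hE hT hq)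

theorem exists_aeval_div_aeval_of_mem {x : K}
    (hx : x ∈ Subfield.closure ((E : Set K) ∪ {T})) (hxV : x ∈ V) :
    ∃ p q : E[X], q.coeff 0 ≠ 0 ∧ x = aeval T p / aeval T q := by
  obtain rfl | hx0 := eq_or_ne x 0
  · exact ⟨0, 1, by simp, by simp⟩
  obtain ⟨f, hf, g, hg, rfl⟩ := Subfield.mem_closure_iff.1 hx
  obtain ⟨hf0, hg0⟩ := div_ne_zero_iff.1 hx0
  obtain ⟨a, p, hp, rfl⟩ := exists_eq_pow_mul_aeval hf hf0
  obtain ⟨b, q, hq, rfl⟩ := exists_eq_pow_mul_aeval hg hg0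
  obtain ⟨c, rfl⟩ | ⟨c, rfl⟩ : (∃ c, a = b + c) ∨ ∃ c, b = a + c + 1 :=
    (le_or_gt b a).imp Nat.exists_eq_add_of_le Nat.exists_eq_add_of_lt
  · have hTb : T ^ b ≠ 0 := left_ne_zero_of_mul hg0
    refine ⟨X ^ c * p, q, hq, ?_⟩
    rw [pow_add, mul_assoc, mul_div_mul_left _ _ hTb, map_mul, map_pow, aeval_X]
  · have hT0 : T ≠ 0 := by rintro rfl; simp at hg0
    refine absurd hxV ((V.inv_mem_nonunits_iff.1 ?_).resolve_left hx0)
    have hinv : (T ^ a * aeval T p / (T ^ (a + c + 1) * aeval T q))⁻¹ =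
        T * (aeval T (X ^ c * q) / aeval T p) := by
      rw [map_mul, map_pow, aeval_X]
      field_simp
      ring
    rw [hinv]
    exact mul_mem_nonunits hT (aeval_div_aeval_mem_valuationSubring hE hT _ hp)

theorem exists_sub_mem_nonunits_of_mem {x : K}
    (hx : x ∈ Subfield.closure ((E : Set K) ∪ {T})) (hxV : x ∈ V) :
    ∃ e ∈ E, x - e ∈ V.nonunits := by
  obtain ⟨p, q, hq, rfl⟩ := exists_aeval_div_aeval_of_mem hE hT hx hxV
  refine ⟨p.coeff 0 / q.coeff 0, div_mem (p.coeff 0).2 (q.coeff 0).2, ?_⟩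
  have hq' := aeval_ne_zero_of_coeff_zero_ne_zero hE hT hq
  have hq0 : (q.coeff 0 : K) ≠ 0 := mod_cast hq
  have hsub : aeval T p / aeval T q - p.coeff 0 / q.coeff 0 =
      ((aeval T p - p.coeff 0) * q.coeff 0 - (aeval T q - q.coeff 0) * p.coeff 0) *
        ((aeval T q)⁻¹ * (q.coeff 0 : K)⁻¹) := by
    field_simp
    ring
  rw [hsub]
  exact mul_mem_nonunits (sub_mem
    (mul_mem_nonunits (aeval_sub_coeff_zero_mem_nonunits hE hT p) (hE (q.coeff 0).2))
    (mul_mem_nonunits (aeval_sub_coeff_zero_mem_nonunits hE hT q) (hE (p.coeff 0).2)))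
    (mul_mem (aeval_inv_mem_valuationSubring hE hT hq) (hE (E.inv_mem (q.coeff 0).2)))

theorem mem_nonunits_iff_exists_eq_mul_div {x : K} :
    x ∈ Subfield.closure ((E : Set K) ∪ {T}) ∧ x ∈ V.nonunits ↔
      ∃ f ∈ Subring.closure ((E : Set K) ∪ {T}), ∃ g ∈ Subring.closure ((E : Set K) ∪ {T}),
        (¬ ∃ h ∈ Subring.closure ((E : Set K) ∪ {T}), g = T * h) ∧ x = T * (f / g) := by
  simp only [mem_closure_union_singleton_iff_exists_aeval]
  constructor
  · rintro ⟨hx, hxV⟩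
    obtain ⟨p, q, hq, rfl⟩ := exists_aeval_div_aeval_of_mem hE hT hx (V.nonunits_subset hxV)
    have hp : p.coeff 0 = 0 := by
      rw [← aeval_mem_nonunits_iff hE hT,
        ← div_mul_cancel₀ (aeval T p) (aeval_ne_zero_of_coeff_zero_ne_zero hE hT hq)]
      exact mul_mem_nonunits hxV (aeval_mem_valuationSubring hE hT q)
    refine ⟨_, ⟨p.divX, rfl⟩, _, ⟨q, rfl⟩, ?_, ?_⟩
    · rintro ⟨_, ⟨h, rfl⟩, hqh⟩
      refine hq ((aeval_mem_nonunits_iff hE hT).1 ?_)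
      rw [hqh]
      exact mul_mem_nonunits hT (aeval_mem_valuationSubring hE hT h)
    · rw [aeval_eq_aeval_divX_mul_add p, hp, ZeroMemClass.coe_zero, add_zero, mul_div_assoc]
  · rintro ⟨_, ⟨p, rfl⟩, _, ⟨q, rfl⟩, hq, rfl⟩
    have hq0 : q.coeff 0 ≠ 0 := fun h ↦
      hq ⟨_, ⟨q.divX, rfl⟩, by simpa [h] using aeval_eq_aeval_divX_mul_add (T := T) q⟩
    have hmem (f : E[X]) : aeval T f ∈ Subfield.closure ((E : Set K) ∪ {T}) :=
      Subfield.subring_closure_le _ (mem_closure_union_singleton_iff_exists_aeval.2 ⟨f, rfl⟩)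
    exact ⟨mul_mem (Subfield.subset_closure (Or.inr rfl)) (div_mem (hmem p) (hmem q)),
      mul_mem_nonunits hT (aeval_div_aeval_mem_valuationSubring hE hT p hq0)⟩

end AdicPlace

section NagataSubring

variable {K : Type*} [Field K]

/-- The Nagata ring `W(T)`: the fractions `f(T)/g(T)` with `f, g ∈ W[X]` and `g` of unit content.
Since a fraction with `g(T) = 0` has the junk value `0`, this is a subring for every `T`, although
it is the usual Nagata ring only when `T` is transcendental over `W`. -/
def nagataSubring (W : Subring K) (T : K) : Subring K where
  carrier := {x | ∃ f g : W[X], g.contentIdeal = ⊤ ∧ x = aeval T f / aeval T g}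
  zero_mem' := ⟨0, 1, contentIdeal_one, by simp⟩
  one_mem' := ⟨1, 1, contentIdeal_one, by simp⟩
  neg_mem' := by
    rintro _ ⟨f, g, hg, rfl⟩
    exact ⟨-f, g, hg, by rw [map_neg, neg_div]⟩
  mul_mem' := by
    rintro _ _ ⟨f, g, hg, rfl⟩ ⟨p, q, hq, rfl⟩
    exact ⟨f * p, g * q, contentIdeal_mul_eq_top_of_contentIdeal_eq_top hg hq,
      by rw [map_mul, map_mul, div_mul_div_comm]⟩
  add_mem' := by
    rintro _ _ ⟨f, g, hg, rfl⟩ ⟨p, q, hq, rfl⟩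
    by_cases hg0 : aeval T g = 0
    · exact ⟨p, q, hq, by simp [hg0]⟩
    by_cases hq0 : aeval T q = 0
    · exact ⟨f, g, hg, by simp [hq0]⟩
    exact ⟨f * q + g * p, g * q, contentIdeal_mul_eq_top_of_contentIdeal_eq_top hg hq,
      by rw [map_add, map_mul, map_mul, map_mul, div_add_div _ _ hg0 hq0]⟩

variable {W : Subring K} {L : Subfield K} {T : K}

theorem le_nagataSubring : W ≤ nagataSubring W T :=
  fun w hw ↦ ⟨C ⟨w, hw⟩, 1, contentIdeal_one, by rw [aeval_C, map_one, div_one]; rfl⟩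

theorem exists_aeval_eq_and_coeff_eq (hWL : (W : Set K) ⊆ L) (p : W[X]) :
    ∃ q : L[X], aeval T q = aeval T p ∧ ∀ n, (q.coeff n : K) = p.coeff n := by
  let ι : W →+* L := W.subtype.codRestrict L fun w ↦ hWL w.2
  refine ⟨p.map ι, ?_, fun n ↦ ?_⟩
  · rw [aeval_def, eval₂_map]
    rfl
  · rw [coeff_map]
    rfl

theorem nagataSubring_subset (hWL : (W : Set K) ⊆ L) :
    (nagataSubring W T : Set K) ⊆ Subfield.closure ((L : Set K) ∪ {T}) := by
  have haeval (p : W[X]) : aeval T p ∈ Subfield.closure ((L : Set K) ∪ {T}) := by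
    obtain ⟨q, hq, -⟩ := exists_aeval_eq_and_coeff_eq (T := T) hWL p
    exact Subfield.subring_closure_le _
      (mem_closure_union_singleton_iff_exists_aeval.2 ⟨q, hq⟩)
  rintro _ ⟨f, g, -, rfl⟩
  exact div_mem (haeval f) (haeval g)

theorem transcendental_of_subset (hWL : (W : Set K) ⊆ L) (hT : Transcendental L T) :
    Transcendental W T := by
  rintro ⟨p, hp, hpT⟩
  obtain ⟨q, hqT, hq⟩ := exists_aeval_eq_and_coeff_eq (T := T) hWL p
  obtain rfl := transcendental_iff.1 hT q (hqT.trans hpT)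
  exact hp (ext fun n ↦ Subtype.ext (hq n).symm)

theorem mem_of_mem_nagataSubring (hWL : (W : Set K) ⊆ L) (hT : Transcendental L T) {x : K}
    (hxL : x ∈ L) (hx : x ∈ nagataSubring W T) : x ∈ W := by
  obtain ⟨f, g, hg, hfg⟩ := hx
  have hg0 : aeval T g ≠ 0 := by
    refine fun h ↦ transcendental_of_subset hWL hT ⟨g, ?_, h⟩
    rintro rfl
    exact bot_ne_top (contentIdeal_zero.symm.trans hg)
  obtain ⟨p, hpT, hp⟩ := exists_aeval_eq_and_coeff_eq (T := T) hWL f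
  obtain ⟨q, hqT, hq⟩ := exists_aeval_eq_and_coeff_eq (T := T) hWL g
  have hpq : p = C ⟨x, hxL⟩ * q := by
    refine transcendental_iff_injective.1 hT ?_
    rw [map_mul, hpT, hqT, aeval_C]
    exact ((eq_div_iff hg0).1 hfg).symm
  have hcoeff (n : ℕ) : (f.coeff n : K) = g.coeff n * x := by
    rw [← hp, ← hq, hpq, coeff_C_mul, mul_comm]
    rfl
  -- As `f = x g` has coefficients in `W`, multiplication by `x` maps the content of `g` into `W`.
  have hle : g.contentIdeal ≤ (1 : Submodule W K).comap (LinearMap.toSpanSingleton W K x) := by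
    rw [contentIdeal_def, Ideal.span_le]
    intro c hc
    obtain ⟨n, -, rfl⟩ := mem_coeffs_iff.1 hc
    exact Submodule.mem_one.2 ⟨f.coeff n, hcoeff n⟩
  obtain ⟨w, hw⟩ := Submodule.mem_one.1 (hle (hg ▸ Submodule.mem_top : (1 : W) ∈ _))
  rw [LinearMap.toSpanSingleton_apply, one_smul] at hw
  exact hw ▸ w.2

theorem exists_aeval_eq_mul_aeval_contentIdeal_eq_top (hW : ∀ x ∈ L, x ∈ W ∨ x⁻¹ ∈ W) {p : L[X]}
    (hp : p ≠ 0) : ∃ c ∈ L, ∃ q : W[X], q.contentIdeal = ⊤ ∧ aeval T p = c * aeval T q := by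
  let V : ValuationSubring L := ⟨W.comap L.subtype, fun x ↦ hW x x.2⟩
  -- Dividing `p` by a coefficient of largest value leaves coefficients in `W`, one of them `1`.
  obtain ⟨n, hn, hmax⟩ := p.support.exists_max_image (fun i ↦ V.valuation (p.coeff i))
    (support_nonempty.2 hp)
  have hn0 : p.coeff n ≠ 0 := mem_support_iff.1 hn
  have hdiv (i : ℕ) : (p.coeff i : K) / p.coeff n ∈ W := by
    suffices p.coeff i / p.coeff n ∈ V from this
    rw [← V.valuation_le_one_iff, map_div₀,
      div_le_one₀ (zero_lt_iff.2 ((Valuation.ne_zero_iff _).2 hn0))]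
    by_cases hi : p.coeff i = 0
    · simp [hi]
    · exact hmax i (mem_support_iff.2 hi)
  let q : W[X] := ∑ i ∈ p.support, monomial i ⟨p.coeff i / p.coeff n, hdiv i⟩
  have hqn : q.coeff n = 1 := by
    have hself : (⟨p.coeff n / p.coeff n, hdiv n⟩ : W) = 1 :=
      Subtype.ext (div_self (Subtype.coe_ne_coe.2 hn0))
    simp only [q, finsetSum_coeff, coeff_monomial, Finset.sum_ite_eq', hn, if_true, hself]
  refine ⟨p.coeff n, (p.coeff n).2, q, ?_, ?_⟩
  · exact (Ideal.eq_top_iff_one _).2 (hqn ▸ coeff_mem_contentIdeal q n)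
  · rw [aeval_def, eval₂_eq_sum, sum_def, map_sum, Finset.mul_sum]
    refine Finset.sum_congr rfl fun i _ ↦ ?_
    rw [aeval_monomial, ← mul_assoc]
    exact congrArg (· * T ^ i) (mul_div_cancel₀ _ (Subtype.coe_ne_coe.2 hn0)).symm

theorem mem_nagataSubring_or_inv_mem (hW : ∀ x ∈ L, x ∈ W ∨ x⁻¹ ∈ W) {x : K}
    (hx : x ∈ Subfield.closure ((L : Set K) ∪ {T})) :
    x ∈ nagataSubring W T ∨ x⁻¹ ∈ nagataSubring W T := by
  obtain ⟨f, hf, g, hg, rfl⟩ := Subfield.mem_closure_iff.1 hx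
  obtain ⟨p, rfl⟩ := mem_closure_union_singleton_iff_exists_aeval.1 hf
  obtain ⟨q, rfl⟩ := mem_closure_union_singleton_iff_exists_aeval.1 hg
  obtain rfl | hp := eq_or_ne p 0
  · exact Or.inl (by simp [zero_mem])
  obtain rfl | hq := eq_or_ne q 0
  · exact Or.inl (by simp [zero_mem])
  obtain ⟨c, hc, f, hf, hpf⟩ := exists_aeval_eq_mul_aeval_contentIdeal_eq_top (T := T) hW hp
  obtain ⟨d, hd, g, hg, hqg⟩ := exists_aeval_eq_mul_aeval_contentIdeal_eq_top (T := T) hW hq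
  rw [hpf, hqg, mul_div_mul_comm, mul_inv, inv_div (aeval T f)]
  exact (hW _ (div_mem hc hd)).imp
    (fun h ↦ mul_mem (le_nagataSubring h) ⟨f, g, hg, rfl⟩)
    (fun h ↦ mul_mem (le_nagataSubring h) ⟨g, f, hf, rfl⟩)

end NagataSubring

section Kronecker

variable {k0 : Type} [Field k0] {r : ℕ}

theorem unitContent_map_subtype_iff {W : Subring (Amb k0 r)} {g : W[X]} :
    unitContent k0 r W (g.map W.subtype) ↔ g.contentIdeal = ⊤ := by
  simp only [unitContent, coeff_map, Subring.subtype_apply]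
  rw [Ideal.eq_top_iff_one]
  constructor
  · rintro ⟨t, u, hu, h⟩
    have hone : ∑ i ∈ t.attach, ⟨u i, hu i i.2⟩ * g.coeff i = 1 := by
      refine Subtype.ext ?_
      push_cast
      rwa [Finset.sum_attach t fun i ↦ u i * (g.coeff i : Amb k0 r)]
    exact hone ▸ sum_mem fun i _ ↦ Ideal.mul_mem_left _ _ (coeff_mem_contentIdeal g i)
  · intro h
    have hle : g.contentIdeal ≤ Submodule.span W (Set.range g.coeff) := by
      rw [contentIdeal_def]
      refine Submodule.span_mono fun c hc ↦ ?_
      obtain ⟨n, -, rfl⟩ := mem_coeffs_iff.1 hc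
      exact ⟨n, rfl⟩
    obtain ⟨u, hu⟩ := Finsupp.mem_span_range_iff_exists_finsupp.1 (hle h)
    refine ⟨u.support, fun i ↦ u i, fun i _ ↦ (u i).2, ?_⟩
    simpa [Finsupp.sum] using congrArg Subtype.val hu

theorem coe_nagataSubring (W : Subring (Amb k0 r)) (T : Amb k0 r) :
    (nagataSubring W T : Set (Amb k0 r)) = nagataSet k0 r W T := by
  have haeval (p : W[X]) : aeval T p = (p.map W.subtype).eval T := (eval_map _ _).symm
  have hlift {p : (Amb k0 r)[X]} (hp : ∀ i, p.coeff i ∈ (W : Set (Amb k0 r))) :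
      ∃ q : W[X], q.map W.subtype = p :=
    mem_lifts p |>.1 <| (lifts_iff_coeff_lifts p).2 fun i ↦ ⟨⟨p.coeff i, hp i⟩, rfl⟩
  ext x
  constructor
  · rintro ⟨f, g, hg, rfl⟩
    refine ⟨f.map W.subtype, g.map W.subtype, fun i ↦ ?_, fun i ↦ ?_,
      unitContent_map_subtype_iff.2 hg, by rw [haeval, haeval]⟩
    · exact coeff_map W.subtype i ▸ (f.coeff i).2
    · exact coeff_map W.subtype i ▸ (g.coeff i).2
  · rintro ⟨f, g, hf, hg, hunit, rfl⟩
    obtain ⟨f, rfl⟩ := hlift hf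
    obtain ⟨g, rfl⟩ := hlift hg
    exact ⟨f, g, unitContent_map_subtype_iff.1 hunit, by rw [haeval, haeval]⟩

/-- `D` is an intersection of valuation rings of `L`, as integrally closed domains are. Only one
inclusion is recorded: `D` always lies in the intersection of its valuation overrings. -/
def IsValuationIntersection (D : Set (Amb k0 r)) (L : Subfield (Amb k0 r)) : Prop :=
  ⋂ W ∈ valOverringsIn k0 r D L, (W : Set (Amb k0 r)) ⊆ D

variable {D D' : Set (Amb k0 r)} {L : Subfield (Amb k0 r)} {T : Amb k0 r}

theorem valOverringsIn_subset_valOverringsIn (h : D ⊆ D') :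
    valOverringsIn k0 r D' L ⊆ valOverringsIn k0 r D L :=
  fun _ hW ↦ ⟨h.trans hW.1, hW.2⟩

theorem IsValuationIntersection.inter (hD : IsValuationIntersection D L)
    (hD' : IsValuationIntersection D' L) : IsValuationIntersection (D ∩ D') L :=
  Set.subset_inter
    ((Set.biInter_subset_biInter_left
      (valOverringsIn_subset_valOverringsIn Set.inter_subset_left)).trans hD)
    ((Set.biInter_subset_biInter_left
      (valOverringsIn_subset_valOverringsIn Set.inter_subset_right)).trans hD')

theorem isValuationIntersection_of_isIntegral {R : Subring (Amb k0 r)}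
    (hRL : (R : Set (Amb k0 r)) ⊆ L) (hR : ∀ x ∈ L, IsIntegral R x → x ∈ R) :
    IsValuationIntersection (R : Set (Amb k0 r)) L := by
  intro x hx
  rw [Set.mem_iInter₂] at hx
  have hxL : x ∈ L := hx L.toSubring ⟨hRL, subset_rfl, fun _ hy ↦ Or.inl hy⟩
  have hxV : x ∈ ⨅ V : {V : ValuationSubring (Amb k0 r) // (R : Set (Amb k0 r)) ⊆ V.toSubring},
      V.1.toSubring := by
    refine Subring.mem_iInf.2 fun V ↦ ?_
    refine (hx (V.1.toSubring ⊓ L.toSubring)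
      ⟨Set.subset_inter V.2 hRL, Set.inter_subset_right, fun y hy ↦ ?_⟩).1
    exact (V.1.mem_or_inv_mem y).imp (⟨·, hy⟩) (⟨·, L.inv_mem hy⟩)
  rw [iInf_valuationSubring_superset, Subring.closure_eq] at hxV
  exact hR x hxL hxV

theorem krSet_inter (hD : IsValuationIntersection D L) (hDL : D ⊆ L) (hT : Transcendental L T) :
    krSet k0 r D L T ∩ L = D := by
  refine subset_antisymm (fun x hx ↦ hD <| Set.mem_iInter₂.2 fun W hW ↦ ?_)
    (Set.subset_inter (Set.subset_iInter₂ fun W hW ↦ ?_) hDL)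
  · have hxW := Set.mem_iInter₂.1 hx.1 W hW
    rw [← coe_nagataSubring] at hxW
    exact mem_of_mem_nagataSubring hW.2.1 hT hx.2 hxW
  · rw [← coe_nagataSubring]
    exact hW.1.trans le_nagataSubring

theorem isValuationIntersection_krSet :
    IsValuationIntersection (krSet k0 r D L T) (Subfield.closure ((L : Set (Amb k0 r)) ∪ {T})) := by
  refine Set.subset_iInter₂ fun W hW ↦ ?_
  have hmem : nagataSubring W T ∈ valOverringsIn k0 r (krSet k0 r D L T)
      (Subfield.closure ((L : Set (Amb k0 r)) ∪ {T})) :=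
    ⟨coe_nagataSubring W T ▸ Set.biInter_subset_of_mem hW, nagataSubring_subset hW.2.1,
      fun _ ↦ mem_nagataSubring_or_inv_mem hW.2.2⟩
  rw [← coe_nagataSubring]
  exact Set.biInter_subset_of_mem hmem

end Kronecker

section AlgebraicIndependent

open IntermediateField

theorem mem_range_algebraMap_of_mem_adjoin_range {ι E E' A : Type*} [Field E] [Field E'] [Field A]
    [Algebra E A] [Algebra E' A] [Algebra E E'] [IsScalarTower E E' A] {z : ι → A}
    (hz : AlgebraicIndependent E' z) {y : A} (hyE' : y ∈ (algebraMap E' A).range)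
    (hy : y ∈ adjoin E (Set.range z)) : y ∈ (algebraMap E A).range := by
  obtain ⟨y, rfl⟩ := hyE'
  obtain ⟨p, q, hpq⟩ := (mem_adjoin_range_iff _ _ _).1 hy
  have haeval (p : MvPolynomial ι E) :
      MvPolynomial.aeval z (p.map (algebraMap E E')) = MvPolynomial.aeval z p :=
    MvPolynomial.aeval_map_algebraMap _ _ _
  obtain hq | hq := eq_or_ne (MvPolynomial.aeval z q) 0
  · rw [hpq, hq, div_zero]
    exact zero_mem _
  have hmap : MvPolynomial.C y * q.map (algebraMap E E') = p.map (algebraMap E E') := by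
    refine hz ?_
    rw [map_mul, haeval, haeval, MvPolynomial.aeval_C, hpq, div_mul_cancel₀ _ hq]
  obtain ⟨m, hm⟩ := MvPolynomial.ne_zero_iff.1 (show q ≠ 0 by rintro rfl; exact hq (map_zero _))
  have hcoeff := congrArg (MvPolynomial.coeff m) hmap
  rw [MvPolynomial.coeff_C_mul, MvPolynomial.coeff_map, MvPolynomial.coeff_map,
    ← eq_div_iff ((_root_.map_ne_zero _).2 hm), ← map_div₀] at hcoeff
  exact ⟨_, (IsScalarTower.algebraMap_apply E E' A _).trans (congrArg _ hcoeff.symm)⟩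

variable {ι F A : Type*} [Field F] [Field A] [Algebra F A] {x : ι → A}

theorem closure_toSubfield_adjoin_union (s t : Set A) :
    Subfield.closure (((adjoin F s).toSubfield : Set A) ∪ t) = (adjoin F (s ∪ t)).toSubfield := by
  rw [Subfield.closure_union, Subfield.closure_eq, adjoin_toSubfield, adjoin_toSubfield,
    ← Subfield.closure_union, Set.union_assoc]

theorem algebraicIndependent_restrict_adjoin_image (hx : AlgebraicIndependent F x) {s t : Set ι}
    (h : Disjoint s t) : AlgebraicIndependent (adjoin F (x '' s)) fun i : t ↦ x i :=
  algebraicIndependent_adjoin_iff.2 (hx.adjoin_of_disjoint h)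

theorem adjoin_image_le_restrictScalars_adjoin_range {s t u : Set ι} (h : u ⊆ s ∪ t) :
    adjoin F (x '' u) ≤
      (adjoin (adjoin F (x '' s)) (Set.range fun i : t ↦ x i)).restrictScalars F := by
  rw [adjoin_adjoin_left, ← Set.image_eq_range, ← Set.image_union]
  exact adjoin.mono _ _ _ (Set.image_mono h)

theorem adjoin_image_inf_adjoin_image (hx : AlgebraicIndependent F x) (s t : Set ι) :
    adjoin F (x '' s) ⊓ adjoin F (x '' t) = adjoin F (x '' (s ∩ t)) := by
  have hle : adjoin F (x '' (s ∩ t)) ≤ adjoin F (x '' t) :=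
    adjoin.mono _ _ _ (Set.image_mono Set.inter_subset_right)
  refine le_antisymm ?_ (le_inf (adjoin.mono _ _ _ (Set.image_mono Set.inter_subset_left)) hle)
  intro y hy
  obtain ⟨hys, hyt⟩ := mem_inf.1 hy
  let : Algebra (adjoin F (x '' (s ∩ t))) (adjoin F (x '' t)) := (inclusion hle).toAlgebra
  have : IsScalarTower (adjoin F (x '' (s ∩ t))) (adjoin F (x '' t)) A :=
    .of_algebraMap_eq fun _ ↦ rfl
  have hz := algebraicIndependent_restrict_adjoin_image hx
    (disjoint_sdiff_self_right (x := t) (y := s))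
  have hys' : y ∈ adjoin (adjoin F (x '' (s ∩ t))) (Set.range fun i : (s \ t : Set ι) ↦ x i) :=
    (mem_restrictScalars F).1
      (adjoin_image_le_restrictScalars_adjoin_range (Set.inter_union_sdiff s t).superset hys)
  obtain ⟨e, rfl⟩ := mem_range_algebraMap_of_mem_adjoin_range hz ⟨⟨y, hyt⟩, rfl⟩ hys'
  exact e.2

theorem mem_adjoin_image_of_isIntegral (hx : AlgebraicIndependent F x) {s t : Set ι} {y : A}
    (hyt : y ∈ adjoin F (x '' t)) (hy : IsIntegral (adjoin F (x '' s)) y) :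
    y ∈ adjoin F (x '' s) := by
  have hz := (algebraicIndependent_restrict_adjoin_image hx
    (disjoint_sdiff_self_right (x := s) (y := t))).algebraicClosure
  have hyt' : y ∈ adjoin (adjoin F (x '' s)) (Set.range fun i : (t \ s : Set ι) ↦ x i) :=
    (mem_restrictScalars F).1 <| adjoin_image_le_restrictScalars_adjoin_range
      (Set.subset_union_right.trans Set.union_sdiff_self.superset) hyt
  obtain ⟨e, rfl⟩ := mem_range_algebraMap_of_mem_adjoin_range hz
    ⟨⟨y, mem_algebraicClosure_iff'.2 hy⟩, rfl⟩ hyt'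
  exact e.2

end AlgebraicIndependent

section Tower

open IntermediateField

variable (k0 : Type) [Field k0] (r n : ℕ)

/-- The indeterminates `Xᵢ`, `Y`, `Zⱼ` of the ambient field as a single family, in the form used by
the theory of algebraic independence. -/
noncomputable def ambVar (v : TowerVars r) : Amb k0 r :=
  algebraMap (MvPolynomial (TowerVars r) k0) (Amb k0 r) (MvPolynomial.X v)

/-- The indices of the indeterminates `X₁, …, Xₙ` generating `kₙ` over `k₀`. -/
def kVars : Set (TowerVars r) :=
  Sum.inl '' Set.Icc 1 n

/-- The indices of the indeterminates `X₁, …, Xₙ, Z₁, …, Z_{r-1}` generating `Fₙ` over `k₀`. -/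
def FVars : Set (TowerVars r) :=
  kVars r n ∪ Set.range (Sum.inr ∘ Sum.inr)

/-- The indices of the indeterminates `X₁, …, Xₙ, Z₁, …, Z_{r-1}, Y` generating `Kₙ` over `k₀`. -/
def KVars : Set (TowerVars r) :=
  FVars r n ∪ {Sum.inr (Sum.inl ())}

theorem algebraicIndependent_ambVar : AlgebraicIndependent k0 (ambVar k0 r) :=
  (MvPolynomial.algebraicIndependent_X (TowerVars r) k0).map'
    (f := IsScalarTower.toAlgHom k0 (MvPolynomial (TowerVars r) k0) (Amb k0 r))
    (IsFractionRing.injective _ _)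

theorem kfld_eq_adjoin : kfld k0 r n = (adjoin k0 (ambVar k0 r '' kVars r n)).toSubfield := by
  have hbase : baseSet k0 r = Set.range (algebraMap k0 (Amb k0 r)) := rfl
  have hvars : {x | ∃ i, 1 ≤ i ∧ i ≤ n ∧ x = ambX k0 r i} = ambVar k0 r '' kVars r n := by
    ext x
    simp only [kVars, Set.image_image, Set.mem_image, Set.mem_Icc, Set.mem_ofPred_eq, and_assoc,
      eq_comm (a := x)]
    rfl
  rw [kfld, hbase, hvars]
  rfl

theorem Ffld_eq_adjoin : Ffld k0 r n = (adjoin k0 (ambVar k0 r '' FVars r n)).toSubfield := by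
  rw [Ffld, kfld_eq_adjoin, closure_toSubfield_adjoin_union, FVars, Set.image_union,
    ← Set.range_comp]
  rfl

theorem Kfld_eq_adjoin : Kfld k0 r n = (adjoin k0 (ambVar k0 r '' KVars r n)).toSubfield := by
  rw [Kfld, Ffld_eq_adjoin, closure_toSubfield_adjoin_union, KVars, Set.image_union,
    Set.image_singleton]
  rfl

theorem kfld_le_Ffld : kfld k0 r n ≤ Ffld k0 r n :=
  fun _ hx ↦ Subfield.subset_closure (Or.inl hx)

theorem Ffld_le_Kfld : Ffld k0 r n ≤ Kfld k0 r n :=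
  fun _ hx ↦ Subfield.subset_closure (Or.inl hx)

theorem ambY_mem_Kfld : ambY k0 r ∈ Kfld k0 r n :=
  Subfield.subset_closure (Or.inr rfl)

theorem kfld_le_kfld_succ : kfld k0 r n ≤ kfld k0 r (n + 1) :=
  Subfield.closure_mono <| Set.union_subset_union_right _
    fun _ ⟨i, hi, hin, hx⟩ ↦ ⟨i, hi, hin.trans n.le_succ, hx⟩

theorem Ffld_le_Ffld_succ : Ffld k0 r n ≤ Ffld k0 r (n + 1) :=
  Subfield.closure_mono <| Set.union_subset_union_left _ (kfld_le_kfld_succ k0 r n)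

theorem Kfld_le_Kfld_succ : Kfld k0 r n ≤ Kfld k0 r (n + 1) :=
  Subfield.closure_mono <| Set.union_subset_union_left _ (Ffld_le_Ffld_succ k0 r n)

theorem kfld_succ_inf_Ffld : kfld k0 r (n + 1) ⊓ Ffld k0 r n = kfld k0 r n := by
  have hvars : kVars r (n + 1) ∩ FVars r n = kVars r n := by
    have hsub : kVars r n ⊆ kVars r (n + 1) :=
      Set.image_mono (Set.Icc_subset_Icc_right n.le_succ)
    have hdisj : Disjoint (kVars r (n + 1)) (Set.range (Sum.inr ∘ Sum.inr)) := by
      simp [Set.disjoint_left, kVars]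
    rw [FVars, Set.inter_union_distrib_left, Set.inter_eq_right.2 hsub, hdisj.inter_eq,
      Set.union_empty]
  rw [kfld_eq_adjoin, Ffld_eq_adjoin, kfld_eq_adjoin, ← hvars,
    ← adjoin_image_inf_adjoin_image (algebraicIndependent_ambVar k0 r)]
  rfl

variable {n} in
theorem mem_kfld_of_isIntegral {x : Amb k0 r} (hxF : x ∈ Ffld k0 r n)
    (hx : IsIntegral (kfld k0 r n) x) : x ∈ kfld k0 r n := by
  rw [Ffld_eq_adjoin] at hxF
  rw [kfld_eq_adjoin] at hx ⊢
  exact mem_adjoin_image_of_isIntegral (algebraicIndependent_ambVar k0 r) hxF hx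

variable {r} in
theorem transcendental_ambVar {s : Set (TowerVars r)} {v : TowerVars r} (hv : v ∉ s) :
    Transcendental (adjoin k0 (ambVar k0 r '' s)) (ambVar k0 r v) :=
  transcendental_adjoin_iff.2 ((algebraicIndependent_ambVar k0 r).transcendental_adjoin hv)

theorem transcendental_ambY : Transcendental (Ffld k0 r n) (ambY k0 r) := by
  rw [Ffld_eq_adjoin]
  exact transcendental_ambVar k0 (by simp [FVars, kVars])

theorem transcendental_ambX_succ : Transcendental (Kfld k0 r n) (ambX k0 r (n + 1)) := by
  rw [Kfld_eq_adjoin]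
  exact transcendental_ambVar k0 (by simp [KVars, FVars, kVars])

theorem ambY_ne_zero : ambY k0 r ≠ 0 :=
  fun h ↦ transcendental_ambY k0 r 0 (h ▸ isAlgebraic_zero)

theorem ambX'_eq : ambX' k0 r n = (ambY k0 r)⁻¹ + ambX k0 r n := by
  rw [ambX', add_div, one_div, mul_div_cancel_left₀ _ (ambY_ne_zero k0 r)]

theorem transcendental_ambX'_succ : Transcendental (Kfld k0 r n) (ambX' k0 r (n + 1)) := by
  intro h
  have hY : IsAlgebraic (Kfld k0 r n) (ambY k0 r)⁻¹ :=
    isAlgebraic_algebraMap (⟨_, inv_mem (ambY_mem_Kfld k0 r n)⟩ : Kfld k0 r n)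
  rw [ambX'_eq] at h
  exact transcendental_ambX_succ k0 r n (by simpa using h.sub hY)

theorem Kfld_succ_eq_closure : Kfld k0 r (n + 1) =
    Subfield.closure ((Kfld k0 r n : Set (Amb k0 r)) ∪ {ambX' k0 r (n + 1)}) := by
  set M := Subfield.closure ((Kfld k0 r n : Set (Amb k0 r)) ∪ {ambX' k0 r (n + 1)})
  have hM : Kfld k0 r n ≤ M := fun _ hx ↦ Subfield.subset_closure (Or.inl hx)
  have hYM : ambY k0 r ∈ M := hM (ambY_mem_Kfld k0 r n)
  have hXM : ambX k0 r (n + 1) ∈ M := by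
    have hX' : ambX' k0 r (n + 1) ∈ M := Subfield.subset_closure (Or.inr rfl)
    simpa [ambX'_eq] using sub_mem hX' (inv_mem hYM)
  have hkM : kfld k0 r (n + 1) ≤ M := by
    refine Subfield.closure_le.2 (Set.union_subset (fun x hx ↦ ?_) ?_)
    · exact hM (Ffld_le_Kfld k0 r n (kfld_le_Ffld k0 r n (Subfield.subset_closure (Or.inl hx))))
    · rintro _ ⟨i, hi, hin, rfl⟩
      obtain rfl | hin := hin.eq_or_lt
      · exact hXM
      · exact hM (Ffld_le_Kfld k0 r n (kfld_le_Ffld k0 r n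
          (Subfield.subset_closure (Or.inr ⟨i, hi, Nat.lt_succ_iff.1 hin, rfl⟩))))
  refine le_antisymm ?_ (Subfield.closure_le.2 (Set.union_subset (Kfld_le_Kfld_succ k0 r n) ?_))
  · refine Subfield.closure_le.2 (Set.union_subset (Subfield.closure_le.2 (Set.union_subset hkM
      fun x hx ↦ ?_)) (Set.singleton_subset_iff.2 hYM))
    exact hM (Ffld_le_Kfld k0 r n (Subfield.subset_closure (Or.inr hx)))
  · have hX : ambX k0 r (n + 1) ∈ kfld k0 r (n + 1) :=
      Subfield.subset_closure (Or.inr ⟨n + 1, n.succ_pos, le_rfl, rfl⟩)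
    rw [Set.singleton_subset_iff, ambX'_eq]
    exact add_mem (inv_mem (ambY_mem_Kfld k0 r _))
      (Ffld_le_Kfld k0 r _ (kfld_le_Ffld k0 r _ hX))

theorem mem_Mset_iff {V : ValuationSubring (Amb k0 r)}
    (hF : (Ffld k0 r n).toSubring ≤ V.toSubring) (hY : ambY k0 r ∈ V.nonunits) {x : Amb k0 r} :
    x ∈ Mset k0 r n ↔ x ∈ Kfld k0 r n ∧ x ∈ V.nonunits := by
  rw [Kfld, mem_nonunits_iff_exists_eq_mul_div hF hY]
  constructor
  · rintro ⟨_, ⟨f, hf, g, hg, hYg, rfl⟩, rfl⟩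
    exact ⟨f, hf, g, hg, hYg, rfl⟩
  · rintro ⟨f, hf, g, hg, hYg, rfl⟩
    exact ⟨_, ⟨f, hf, g, hg, hYg, rfl⟩, rfl⟩

theorem Aset_eq_inter {V : ValuationSubring (Amb k0 r)}
    (hF : (Ffld k0 r n).toSubring ≤ V.toSubring) (hY : ambY k0 r ∈ V.nonunits) :
    Aset k0 r n = ↑(addMaximalIdeal (kfld k0 r n) V ⊓ (Kfld k0 r n).toSubring) := by
  have hk : kfld k0 r n ≤ Kfld k0 r n := (kfld_le_Ffld k0 r n).trans (Ffld_le_Kfld k0 r n)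
  ext x
  rw [SetLike.mem_coe, Subring.mem_inf,
    mem_addMaximalIdeal_iff fun _ h ↦ hF (kfld_le_Ffld k0 r n h)]
  constructor
  · rintro ⟨c, hc, m, hm, rfl⟩
    rw [mem_Mset_iff k0 r n hF hY] at hm
    exact ⟨⟨c, hc, by simpa using hm.2⟩, add_mem (hk hc) hm.1⟩
  · rintro ⟨⟨c, hc, hxc⟩, hx⟩
    exact ⟨c, hc, x - c, (mem_Mset_iff k0 r n hF hY).2 ⟨sub_mem hx (hk hc), hxc⟩,
      (add_sub_cancel c x).symm⟩

theorem isValuationIntersection_Aset :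
    IsValuationIntersection (Aset k0 r n) (Kfld k0 r n) := by
  obtain ⟨V, hF, hY⟩ := exists_valuationSubring_of_transcendental (transcendental_ambY k0 r n)
  rw [Aset_eq_inter k0 r n hF hY]
  refine isValuationIntersection_of_isIntegral Set.inter_subset_right fun x hx hint ↦ ?_
  have hintA : IsIntegral (addMaximalIdeal (kfld k0 r n) V) x :=
    hint.map_of_comp_eq (Subring.inclusion inf_le_left) (.id (Amb k0 r)) rfl
  obtain ⟨e, he, hxe⟩ :=
    exists_sub_mem_nonunits_of_mem hF hY hx (mem_of_isIntegral_addMaximalIdeal hintA)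
  have hek : e ∈ kfld k0 r n := mem_kfld_of_isIntegral k0 r he
    (isIntegral_of_isIntegral_addMaximalIdeal (kfld_le_Ffld k0 r n) hF hintA he hxe)
  exact ⟨(mem_addMaximalIdeal_iff fun _ h ↦ hF (kfld_le_Ffld k0 r n h)).2 ⟨e, hek, hxe⟩, hx⟩

theorem Aset_eq_Aset_succ_inter :
    Aset k0 r n = Aset k0 r (n + 1) ∩ (Kfld k0 r n : Set (Amb k0 r)) := by
  obtain ⟨V, hF', hY⟩ :=
    exists_valuationSubring_of_transcendental (transcendental_ambY k0 r (n + 1))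
  have hF : (Ffld k0 r n).toSubring ≤ V.toSubring := fun _ hx ↦ hF' (Ffld_le_Ffld_succ k0 r n hx)
  have hk' : (kfld k0 r (n + 1)).toSubring ≤ V.toSubring :=
    fun _ hx ↦ hF' (kfld_le_Ffld k0 r _ hx)
  have hk : (kfld k0 r n).toSubring ≤ V.toSubring := fun _ hx ↦ hF (kfld_le_Ffld k0 r n hx)
  rw [Aset_eq_inter k0 r n hF hY, Aset_eq_inter k0 r (n + 1) hF' hY]
  ext x
  constructor
  · rintro ⟨hxA, hxK⟩
    obtain ⟨c, hc, hxc⟩ := (mem_addMaximalIdeal_iff hk).1 hxA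
    exact ⟨⟨(mem_addMaximalIdeal_iff hk').2 ⟨c, kfld_le_kfld_succ k0 r n hc, hxc⟩,
      Kfld_le_Kfld_succ k0 r n hxK⟩, hxK⟩
  · rintro ⟨⟨hxA, -⟩, hxK⟩
    obtain ⟨c, hc, hxc⟩ := (mem_addMaximalIdeal_iff hk').1 hxA
    obtain ⟨e, he, hxe⟩ := exists_sub_mem_nonunits_of_mem hF hY hxK (addMaximalIdeal_le hxA)
    have hce : c - e = 0 := by
      refine eq_zero_of_mem_subfield_of_mem_nonunits hF'
        (sub_mem (kfld_le_Ffld k0 r _ hc) (Ffld_le_Ffld_succ k0 r n he)) ?_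
      rw [← sub_sub_sub_cancel_left]
      exact V.valuation.map_sub_lt hxe hxc
    obtain rfl := sub_eq_zero.1 hce
    have hck : c ∈ kfld k0 r (n + 1) ⊓ Ffld k0 r n := ⟨hc, he⟩
    rw [kfld_succ_inf_Ffld] at hck
    exact ⟨(mem_addMaximalIdeal_iff hk).2 ⟨c, hck, hxc⟩, hxK⟩

theorem Aset_subset_Kfld : Aset k0 r n ⊆ Kfld k0 r n := by
  rw [Aset_eq_Aset_succ_inter]
  exact Set.inter_subset_right

theorem Dset_add_two : Dset k0 r (n + 2) = Bset k0 r (n + 2) ∩ Aset k0 r (n + 2) := by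
  rw [Dset, Bset, Nat.add_succ_sub_one]

theorem Dset_succ_subset_Aset : Dset k0 r (n + 1) ⊆ Aset k0 r (n + 1) := by
  cases n with
  | zero => rw [zero_add, Dset]
  | succ n => exact (Dset_add_two k0 r n).trans_subset Set.inter_subset_right

theorem isValuationIntersection_Dset_succ :
    IsValuationIntersection (Dset k0 r (n + 1)) (Kfld k0 r (n + 1)) := by
  cases n with
  | zero =>
    rw [zero_add, Dset]
    exact isValuationIntersection_Aset k0 r 1
  | succ n =>
    rw [Dset_add_two]
    refine IsValuationIntersection.inter ?_ (isValuationIntersection_Aset k0 r (n + 2))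
    rw [Kfld_succ_eq_closure, Bset]
    exact isValuationIntersection_krSet

theorem Bset_add_two_inter_Kfld :
    Bset k0 r (n + 2) ∩ (Kfld k0 r (n + 1) : Set (Amb k0 r)) = Dset k0 r (n + 1) :=
  krSet_inter (isValuationIntersection_Dset_succ k0 r n)
    ((Dset_succ_subset_Aset k0 r n).trans (Aset_subset_Kfld k0 r (n + 1)))
    (transcendental_ambX'_succ k0 r (n + 1))

end Tower

/-- In the tower construction, for every `n ≥ 2`:
`Bₙ ∩ K_{n-1} = D_{n-1} ⊆ A_{n-1} = Aₙ ∩ K_{n-1}` and `Dₙ ∩ K_{n-1} = D_{n-1}`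
(all intersections taken inside the ambient field). -/
theorem tower_contractions_to_previous_level
    (k0 : Type) [Field k0] (r : ℕ) (hr : 2 ≤ r) (n : ℕ) (hn : 2 ≤ n) :
    Bset k0 r n ∩ (Kfld k0 r (n - 1) : Set (Amb k0 r)) = Dset k0 r (n - 1) ∧
    Dset k0 r (n - 1) ⊆ Aset k0 r (n - 1) ∧
    Aset k0 r (n - 1) = Aset k0 r n ∩ (Kfld k0 r (n - 1) : Set (Amb k0 r)) ∧
    Dset k0 r n ∩ (Kfld k0 r (n - 1) : Set (Amb k0 r)) = Dset k0 r (n - 1) := by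
  obtain ⟨m, rfl⟩ : ∃ m, n = m + 2 := ⟨n - 2, by omega⟩
  have hB := Bset_add_two_inter_Kfld k0 r m
  have hDA := Dset_succ_subset_Aset k0 r m
  have hA := Aset_eq_Aset_succ_inter k0 r (m + 1)
  refine ⟨hB, hDA, hA, ?_⟩
  calc Dset k0 r (m + 2) ∩ (Kfld k0 r (m + 1) : Set (Amb k0 r))
      = Bset k0 r (m + 2) ∩ Kfld k0 r (m + 1) ∩ Aset k0 r (m + 2) := by
        rw [Dset_add_two, Set.inter_right_comm]
    _ = Dset k0 r (m + 1) ∩ Aset k0 r (m + 2) := by rw [hB]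
    _ = Dset k0 r (m + 1) := Set.inter_eq_left.2 (hDA.trans (hA.subset.trans Set.inter_subset_left))
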